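/- arXiv:2507.00997 — 7 statements merged into one kernel-verified Lean document; each statement's English description precedes it below -/
import Mathlib

section
/- Let R : ℝ → ℝ^{3×3} be differentiable with R(t) ∈ SO(3) for every t, let ω : ℝ → ℝ³, and suppose Ṙ(t) = R(t)·ω(t)^× for all t. Then for every t, the derivative of t ↦ e_R(R(t)) equals E(R(t))·ω(t), where E(M) = (1/2)(tr(M)·I − Mᵀ). Equivalently, (1/2)(R(t)ω(t)^× + ω(t)^×R(t)ᵀ) = (E(R(t))ω(t))^×. -/
/-!
The identity `(1/2)(M x^× + x^× Mᵀ) = (E(M) x)^×` is linear in `M` and in `x` and holds for every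
real 3×3 matrix `M`; it is verified entrywise (`half_smul_hat_eq`). Since `(x^×)ᵀ = -x^×`, its
left side at `M = R`, `x = ω` is half of `Ṙ - Ṙᵀ`, so applying `vee` to the identity gives the
derivative of `e_R` along the curve.
-/

open Matrix Polynomial Filter

noncomputable section

/-- The hat map `x ↦ x^×`: the unique skew-symmetric matrix with `x^× y = x × y`. -/
def hat (x : Fin 3 → ℝ) : Matrix (Fin 3) (Fin 3) ℝ :=
  !![0, -x 2, x 1; x 2, 0, -x 0; -x 1, x 0, 0]

/-- The vee map, inverse of the hat map: `(x^×)^∨ = x`. -/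
def vee (M : Matrix (Fin 3) (Fin 3) ℝ) : Fin 3 → ℝ :=
  ![M 2 1, M 0 2, M 1 0]

/-- `R ∈ SO(3)`: real 3×3 matrices with `RᵀR = I` and `det R = 1`. -/
def SO3 (R : Matrix (Fin 3) (Fin 3) ℝ) : Prop :=
  Rᵀ * R = 1 ∧ R.det = 1

/-- The chordal attitude error function `Ψ(R) = (1/2) tr(I - R)`. -/
def Psi (R : Matrix (Fin 3) (Fin 3) ℝ) : ℝ := (1 / 2) * (1 - R).trace

/-- The attitude error vector `e_R(R) = (1/2)(R - Rᵀ)^∨`. -/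
def eR (R : Matrix (Fin 3) (Fin 3) ℝ) : Fin 3 → ℝ := (1 / 2 : ℝ) • vee (R - Rᵀ)

/-- The map `E(M) = (1/2)(tr(M)·I - Mᵀ)`. -/
def Emap (M : Matrix (Fin 3) (Fin 3) ℝ) : Matrix (Fin 3) (Fin 3) ℝ :=
  (1 / 2 : ℝ) • (M.trace • (1 : Matrix (Fin 3) (Fin 3) ℝ) - Mᵀ)
theorem half_smul_hat_eq (M : Matrix (Fin 3) (Fin 3) ℝ) (x : Fin 3 → ℝ) :
    (1 / 2 : ℝ) • (M * hat x + hat x * Mᵀ) = hat (Emap M *ᵥ x) := by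
  ext i j
  fin_cases i <;> fin_cases j <;>
    simp [hat, Emap, Matrix.mul_apply, Matrix.mulVec, Matrix.vecMul, dotProduct,
      Fin.sum_univ_three, Matrix.trace] <;> ring

theorem hat_transpose (x : Fin 3 → ℝ) : (hat x)ᵀ = -hat x := by
  ext i j
  fin_cases i <;> fin_cases j <;> simp [hat]

theorem vee_hat (x : Fin 3 → ℝ) : vee (hat x) = x := by
  ext i
  fin_cases i <;> simp [vee, hat]

/-- `e_R` is linear in the matrix, so its value at `Ṙ = M x^×` is the derivative of `e_R`. -/
theorem eR_mul_hat (M : Matrix (Fin 3) (Fin 3) ℝ) (x : Fin 3 → ℝ) :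
    eR (M * hat x) = Emap M *ᵥ x := by
  have hvee : ∀ A : Matrix (Fin 3) (Fin 3) ℝ, (1 / 2 : ℝ) • vee A = vee ((1 / 2 : ℝ) • A) := by
    intro A
    ext i
    fin_cases i <;> simp [vee]
  rw [eR, hvee, Matrix.transpose_mul, hat_transpose, neg_mul, sub_neg_eq_add,
    half_smul_hat_eq, vee_hat]

/-- if `R` is a differentiable SO(3)-valued curve satisfying `Ṙ = R ω^×`,
then `d/dt e_R(R(t)) = E(R(t)) ω(t)`; equivalently
`(1/2)(R ω^× + ω^× Rᵀ) = (E(R) ω)^×`. -/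
theorem attitude_error_vector_derivative
    (R : ℝ → Matrix (Fin 3) (Fin 3) ℝ) (ω : ℝ → Fin 3 → ℝ)
    (hSO : ∀ t, SO3 (R t))
    (hkin : ∀ t, ∀ i j, HasDerivAt (fun s => R s i j) ((R t * hat (ω t)) i j) t) :
    (∀ t, ∀ i, HasDerivAt (fun s => eR (R s) i) ((Emap (R t) *ᵥ ω t) i) t) ∧
    (∀ t, (1 / 2 : ℝ) • (R t * hat (ω t) + hat (ω t) * (R t)ᵀ) = hat (Emap (R t) *ᵥ ω t)) := by
  refine ⟨fun t i => ?_, fun t => half_smul_hat_eq (R t) (ω t)⟩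
  rw [← eR_mul_hat]
  have h := fun i j => ((hkin t i j).sub (hkin t j i)).const_mul (1 / 2 : ℝ)
  fin_cases i
  · exact h 2 1
  · exact h 0 2
  · exact h 1 0
end
end

section
/- Let α ∈ ℝ³ with ‖α‖ = 1, let θ ∈ ℝ, and let R = I + (sin θ)α^× + (1 − cos θ)α^×α^× (the Rodrigues formula for exp(θα^×)). Then the characteristic polynomial of the matrix E(R)ᵀE(R) is (λ − cos²θ)·(λ − (1 + cos θ)/2)²; that is, the eigenvalues of E(R)ᵀE(R) are (1 + cos θ)/2, (1 + cos θ)/2, and cos²θ. -/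
/-!
Write `P = α αᵀ` for the orthogonal projection onto the axis and `K = α^×`. Then `K² = P - 1` and
`K P = P K = 0`, so `R = cos θ + sin θ K + (1 - cos θ) P` has trace `1 + 2 cos θ`, and
`E(R) = ½ ((1 + cos θ) + sin θ K - (1 - cos θ) P)`. Multiplying out (`emap_transpose_mul_emap`),
`E(R)ᵀ E(R) = a + (cos² θ - a) P` with `a = (1 + cos θ) / 2`: a scalar matrix plus a rank-one
matrix, whose characteristic polynomial is given by `charpoly_smul_one_add_rankOne`.
-/

open Matrix Polynomial Filter

noncomputable section

lemma hat_mul_hat (α : Fin 3 → ℝ) (hα : α ⬝ᵥ α = 1) :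
    hat α * hat α = vecMulVec α α - 1 := by
  simp only [dotProduct, Fin.sum_univ_three] at hα
  ext i j
  fin_cases i <;> fin_cases j <;>
    simp [hat, Matrix.mul_apply, Fin.sum_univ_three, vecMulVec_apply] <;> linarith

lemma hat_mul_rankOne (α : Fin 3 → ℝ) : hat α * vecMulVec α α = 0 := by
  ext i j
  fin_cases i <;> fin_cases j <;>
    simp [hat, Matrix.mul_apply, Fin.sum_univ_three, vecMulVec_apply] <;> ring

lemma rankOne_mul_hat (α : Fin 3 → ℝ) : vecMulVec α α * hat α = 0 := by
  ext i j
  fin_cases i <;> fin_cases j <;>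
    simp [hat, Matrix.mul_apply, Fin.sum_univ_three, vecMulVec_apply] <;> ring

lemma transpose_hat (α : Fin 3 → ℝ) : (hat α)ᵀ = -hat α := by
  ext i j
  fin_cases i <;> fin_cases j <;> simp [hat]

lemma trace_hat (α : Fin 3 → ℝ) : (hat α).trace = 0 := by
  simp [hat, Matrix.trace, Fin.sum_univ_three]

lemma emap_rodrigues (α : Fin 3 → ℝ) (hα : α ⬝ᵥ α = 1) (s c : ℝ) :
    Emap (1 + s • hat α + (1 - c) • (hat α * hat α)) =
      (1 / 2 : ℝ) • ((1 + c) • (1 : Matrix (Fin 3) (Fin 3) ℝ) + s • hat α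
        - (1 - c) • vecMulVec α α) := by
  rw [hat_mul_hat α hα, Emap]
  simp only [trace_add, trace_sub, trace_smul, trace_one, trace_hat, trace_vecMulVec, hα,
    transpose_add, transpose_sub, transpose_smul, transpose_one, transpose_hat,
    transpose_vecMulVec, Fintype.card_fin, smul_eq_mul]
  push_cast
  module

lemma emap_transpose_mul_emap (α : Fin 3 → ℝ) (hα : α ⬝ᵥ α = 1) (s c : ℝ)
    (hsc : s ^ 2 + c ^ 2 = 1) :
    (Emap (1 + s • hat α + (1 - c) • (hat α * hat α)))ᵀ *
        Emap (1 + s • hat α + (1 - c) • (hat α * hat α)) =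
      ((1 + c) / 2) • (1 : Matrix (Fin 3) (Fin 3) ℝ)
        + (c ^ 2 - (1 + c) / 2) • vecMulVec α α := by
  have hP : vecMulVec α α * vecMulVec α α = vecMulVec α α := by
    rw [vecMulVec_mul_vecMulVec, hα, one_smul]
  rw [emap_rodrigues α hα]
  simp only [transpose_add, transpose_sub, transpose_smul, transpose_one, transpose_hat,
    transpose_vecMulVec, smul_mul_assoc, mul_smul_comm, add_mul, mul_add, sub_mul, mul_sub,
    neg_mul, one_mul, mul_one, hat_mul_hat α hα, hat_mul_rankOne, rankOne_mul_hat, hP,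
    smul_neg]
  -- The coefficients of `1`, `K` and `P`; that of `K` cancels identically.
  match_scalars
  · linear_combination (1 / 4 : ℝ) * hsc
  · ring
  · linear_combination (-1 / 4 : ℝ) * hsc

lemma charpoly_smul_one_add_rankOne (α : Fin 3 → ℝ) (hα : α ⬝ᵥ α = 1) (a b : ℝ) :
    (a • (1 : Matrix (Fin 3) (Fin 3) ℝ) + b • vecMulVec α α).charpoly =
      (X - C (a + b)) * (X - C a) ^ 2 := by
  have h : C (α 0) * C (α 0) + C (α 1) * C (α 1) + C (α 2) * C (α 2) = (1 : ℝ[X]) := by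
    simp only [dotProduct, Fin.sum_univ_three] at hα
    rw [← C_mul, ← C_mul, ← C_mul, ← C_add, ← C_add, hα, C_1]
  rw [Matrix.charpoly, det_fin_three]
  simp [vecMulVec_apply]
  linear_combination (-(C b) * (X - C a) ^ 2) * h

/-- for the Rodrigues rotation `R = I + sin θ · α^× + (1 - cos θ) · α^× α^×`
about a unit axis `α`, the characteristic polynomial of `E(R)ᵀ E(R)` is
`(λ - cos²θ)(λ - (1 + cos θ)/2)²`. -/
theorem charpoly_Emap_rodrigues
    (α : Fin 3 → ℝ) (hα : α ⬝ᵥ α = 1) (θ : ℝ)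
    (R : Matrix (Fin 3) (Fin 3) ℝ)
    (hR : R = 1 + Real.sin θ • hat α + (1 - Real.cos θ) • (hat α * hat α)) :
    ((Emap R)ᵀ * Emap R).charpoly =
      (X - C (Real.cos θ ^ 2)) * (X - C ((1 + Real.cos θ) / 2)) ^ 2 := by
  subst hR
  rw [emap_transpose_mul_emap α hα _ _ (Real.sin_sq_add_cos_sq θ),
    charpoly_smul_one_add_rankOne α hα, add_sub_cancel]
end
end

section
/- For every R ∈ SO(3), the matrix I − E(R)ᵀE(R) is positive semidefinite; equivalently, ‖E(R)v‖ ≤ ‖v‖ for every v ∈ ℝ³. -/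
/-!
Let `t = tr R`. Orthogonality of `R` gives `4 (I - E(R)ᵀE(R)) = (3 - t²) I + t (R + Rᵀ)`,
which splits as `(I - R)ᵀ(I - R) + (1 + t) S` with `S = R + Rᵀ - (t - 1) I`. The first summand is a Gram matrix.

For the second, `Rᵀ` is the adjugate of `R`, so Cayley–Hamilton reads `R² = t R - t I + Rᵀ`
(`SO3.sq_eq`). It follows that `SᵀS = (3 - t) S` and that
`tr ((R - Rᵀ)ᵀ(R - Rᵀ)) = 2 (1 + t)(3 - t)`, while `tr ((I - R)ᵀ(I - R)) = 2 (3 - t)`. Hence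
`t ≤ 3`; if `t < 3`, then `S` is positive semidefinite and `1 + t ≥ 0`; if `t = 3`, then `R = I`
and `I - E(R)ᵀE(R)` vanishes.
-/

open Matrix Polynomial Filter

noncomputable section

/-- Cayley–Hamilton in dimension three, solved for the adjugate. -/
theorem adjugate_eq_sq_sub (M : Matrix (Fin 3) (Fin 3) ℝ) :
    M.adjugate = M * M - M.trace • M + M.adjugate.trace • (1 : Matrix (Fin 3) (Fin 3) ℝ) := by
  ext i j
  fin_cases i <;> fin_cases j <;>
    simp [Matrix.adjugate_fin_three, Matrix.trace_fin_three, Matrix.mul_apply,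
      Fin.sum_univ_three] <;> ring

/-- Cayley–Hamilton for a rotation, using that `Rᵀ` is the adjugate of `R`. -/
theorem SO3.sq_eq {R : Matrix (Fin 3) (Fin 3) ℝ} (hR : SO3 R) :
    R * R = R.trace • R - R.trace • (1 : Matrix (Fin 3) (Fin 3) ℝ) + Rᵀ := by
  have hadj : R.adjugate = Rᵀ := by
    calc R.adjugate = (Rᵀ * R) * R.adjugate := by rw [hR.1, one_mul]
      _ = Rᵀ := by rw [mul_assoc, mul_adjugate, hR.2, one_smul, mul_one]
  have h := adjugate_eq_sq_sub R
  rw [hadj, trace_transpose] at h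
  rw [h]
  abel

theorem trace_gram_nonneg (M : Matrix (Fin 3) (Fin 3) ℝ) :
    0 ≤ (Mᵀ * M).trace := by
  have h := (posSemidef_conjTranspose_mul_self M).trace_nonneg
  rwa [conjTranspose_eq_transpose_of_trivial] at h

/-- for every `R ∈ SO(3)`, the matrix `I - E(R)ᵀE(R)` is positive
semidefinite (equivalently `‖E(R)v‖ ≤ ‖v‖` for all `v`). -/
theorem one_sub_Emap_posSemidef
    (R : Matrix (Fin 3) (Fin 3) ℝ) (hR : SO3 R) :
    ((1 : Matrix (Fin 3) (Fin 3) ℝ) - (Emap R)ᵀ * Emap R).PosSemidef := by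
  have hsq := hR.sq_eq
  have h1 : Rᵀ * R = 1 := hR.1
  have h2 : R * Rᵀ = 1 := mul_eq_one_comm.mp h1
  have hsqT : Rᵀ * Rᵀ = R.trace • Rᵀ - R.trace • (1 : Matrix (Fin 3) (Fin 3) ℝ) + R := by
    have h := congrArg transpose hsq
    simpa [transpose_mul] using h
  have htsq : (R * R).trace = R.trace * R.trace - R.trace * 3 + R.trace := by
    rw [hsq]; simp
  have htsqT : (Rᵀ * Rᵀ).trace = R.trace * R.trace - R.trace * 3 + R.trace := by
    rw [← transpose_mul, trace_transpose, htsq]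
  generalize ht : R.trace = t at *
  have hD : (1 - R)ᵀ * (1 - R) = (2 : ℝ) • (1 : Matrix (Fin 3) (Fin 3) ℝ) - R - Rᵀ := by
    simp only [transpose_sub, transpose_one, mul_sub, sub_mul, one_mul, mul_one, h1]
    module
  have hDtr : ((1 - R)ᵀ * (1 - R)).trace = 6 - 2 * t := by
    rw [hD]; simp [ht]; ring
  have hE : (1 : Matrix (Fin 3) (Fin 3) ℝ) - (Emap R)ᵀ * Emap R
      = (1 / 4 : ℝ) • ((3 - t ^ 2) • (1 : Matrix (Fin 3) (Fin 3) ℝ) + t • (R + Rᵀ)) := by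
    simp only [Emap, ht, transpose_sub, transpose_smul, transpose_one, transpose_transpose,
      mul_sub, sub_mul, smul_mul_assoc, mul_smul_comm, one_mul, mul_one, h2]
    module
  have ht3 : t ≤ 3 := by
    have := trace_gram_nonneg (1 - R)
    linarith
  rcases ht3.eq_or_lt with h3 | h3
  · have h0 : (1 - R)ᴴ * (1 - R) = 0 := by
      apply (posSemidef_conjTranspose_mul_self (1 - R)).trace_eq_zero_iff.mp
      rw [conjTranspose_eq_transpose_of_trivial, hDtr, h3]; norm_num
    have hR1 : R = 1 := (sub_eq_zero.mp (conjTranspose_mul_self_eq_zero.mp h0)).symm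
    have : (1 : Matrix (Fin 3) (Fin 3) ℝ) - (Emap R)ᵀ * Emap R = 0 := by
      rw [hE, hR1, h3, transpose_one]; module
    rw [this]
    exact PosSemidef.zero
  · have hprod : 0 ≤ (1 + t) * (3 - t) := by
      have h := trace_gram_nonneg (R - Rᵀ)
      have he : ((R - Rᵀ)ᵀ * (R - Rᵀ)).trace = 2 * ((1 + t) * (3 - t)) := by
        simp only [transpose_sub, transpose_transpose, mul_sub, sub_mul, h1, h2, trace_sub,
          htsq, htsqT, trace_one, Fintype.card_fin]
        push_cast; ring
      linarith
    have hpos : 0 < 3 - t := by linarith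
    have ht1 : 0 ≤ 1 + t := nonneg_of_mul_nonneg_left hprod hpos
    -- `S = (3 - t) n nᵀ`, where `n` is the unit rotation axis, so that `S ^ 2 = (3 - t) S`.
    set S : Matrix (Fin 3) (Fin 3) ℝ := R + Rᵀ - (t - 1) • 1 with hS
    have hSS : Sᴴ * S = (3 - t) • S := by
      rw [conjTranspose_eq_transpose_of_trivial]
      simp only [hS, transpose_sub, transpose_add, transpose_smul, transpose_one,
        transpose_transpose, mul_sub, sub_mul, mul_add, add_mul, smul_mul_assoc, mul_smul_comm,
        one_mul, mul_one, h1, h2, hsq, hsqT]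
      module
    have hSpos : S.PosSemidef := by
      have h := (posSemidef_conjTranspose_mul_self S).smul (inv_nonneg.mpr hpos.le)
      rwa [hSS, inv_smul_smul₀ hpos.ne'] at h
    have hkey : (1 : Matrix (Fin 3) (Fin 3) ℝ) - (Emap R)ᵀ * Emap R
        = (1 / 4 : ℝ) • ((1 - R)ᴴ * (1 - R) + (1 + t) • S) := by
      rw [hE, conjTranspose_eq_transpose_of_trivial, hD, hS]
      module
    rw [hkey]
    exact ((posSemidef_conjTranspose_mul_self (1 - R)).add (hSpos.smul ht1)).smul (by norm_num)
end
end

section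
/- For every R ∈ SO(3), Ψ(R) ≥ (1/2)‖e_R(R)‖², i.e., (1/2)tr(I − R) ≥ (1/2)‖(1/2)(R − Rᵀ)^∨‖². -/
/-!
If `R` is a rotation by `θ`, then `Ψ(R) = 1 - cos θ` and `‖e_R(R)‖² = sin² θ`, so the difference
`Ψ(R) - ‖e_R(R)‖² / 2` equals `(1 - cos θ)² / 2 ≥ 0`. The angle is avoided by working with
`t = tr R = 1 + 2 cos θ`: the identity `4 ‖e_R(R)‖² = 3 + 2t - t²` follows from `‖R‖_F² = 3` and from
`adj R = Rᵀ`, which says that the principal `2 × 2` minors of `R` are its diagonal entries.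
-/

open Matrix Polynomial Filter

noncomputable section

/-- for every `R ∈ SO(3)`, `Ψ(R) ≥ (1/2)‖e_R(R)‖²`
(here `‖v‖² = v ⬝ᵥ v` is the squared Euclidean norm). -/
theorem Psi_ge_half_norm_sq_eR
    (R : Matrix (Fin 3) (Fin 3) ℝ) (hR : SO3 R) :
    Psi R ≥ (1 / 2) * (eR R ⬝ᵥ eR R) := by
  obtain ⟨hO, hdet⟩ := hR
  -- The adjugate is `det R • R⁻¹`, and here `R⁻¹ = Rᵀ`.
  have hadj : R.adjugate = Rᵀ := by
    calc R.adjugate = (Rᵀ * R) * R.adjugate := by rw [hO, one_mul]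
      _ = Rᵀ := by rw [mul_assoc, mul_adjugate, hdet, one_smul, mul_one]
  have c0 := congrFun (congrFun hadj 0) 0
  have c1 := congrFun (congrFun hadj 1) 1
  have c2 := congrFun (congrFun hadj 2) 2
  have d0 := congrFun (congrFun hO 0) 0
  have d1 := congrFun (congrFun hO 1) 1
  have d2 := congrFun (congrFun hO 2) 2
  simp [adjugate_fin_three] at c0 c1 c2
  simp [mul_apply, Fin.sum_univ_three] at d0 d1 d2
  simp [Psi, eR, vee, trace, dotProduct, Fin.sum_univ_three]
  -- The square is `(3 - t)² = 4 (1 - cos θ)²`.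
  nlinarith [sq_nonneg (3 - (R 0 0 + R 1 1 + R 2 2))]
end
end

section
/- Let R : ℝ → ℝ^{3×3} be differentiable with R(t) ∈ SO(3) and tr(R(t)) > −1 for every t, let ω : ℝ → ℝ³, and suppose Ṙ(t) = R(t)·ω(t)^× for all t. Then for every t, the derivative of t ↦ e_q(R(t)) equals (1/(2√(1 + tr(R(t)))))·(tr(R(t))·I − R(t)ᵀ + 2 e_q(R(t)) e_q(R(t))ᵀ)·ω(t). -/
/-! Write `v = (R - Rᵀ)^∨` and `s = √(1 + tr R)`, so that `e_q = v / (2 s)`. Along `Ṙ = R ω^×` two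
identities, both linear in `R` and valid for every 3×3 matrix, hold: `v̇ = (tr(R) I - Rᵀ) ω`
(`vee_mul_hat`) and `d/dt tr R = tr(R ω^×) = -⟨v, ω⟩` (`trace_mul_hat`). The quotient rule gives
`ė_q = v̇ / (2 s) + v ⟨v, ω⟩ / (4 s³)`, and the last term is `(1 / (2 s)) · 2 e_q e_qᵀ ω`. -/

open Matrix Polynomial Filter

noncomputable section

/-- The attitude error function `Ψ_q(R) = 2 - √(1 + tr R)`. -/
def Psiq (R : Matrix (Fin 3) (Fin 3) ℝ) : ℝ := 2 - Real.sqrt (1 + R.trace)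

/-- The attitude error vector `e_q(R) = (1/(2√(1 + tr R)))(R - Rᵀ)^∨`. -/
def eq' (R : Matrix (Fin 3) (Fin 3) ℝ) : Fin 3 → ℝ :=
  (1 / (2 * Real.sqrt (1 + R.trace))) • vee (R - Rᵀ)

/-- The matrix `Ẽ(R) = (1/(2√(1 + tr R)))(tr(R)·I - Rᵀ + 2 e_q(R) e_q(R)ᵀ)` appearing in
the derivative of `e_q`. -/
def Etilde (R : Matrix (Fin 3) (Fin 3) ℝ) : Matrix (Fin 3) (Fin 3) ℝ :=
  (1 / (2 * Real.sqrt (1 + R.trace))) •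
    (R.trace • (1 : Matrix (Fin 3) (Fin 3) ℝ) - Rᵀ
      + (2 : ℝ) • Matrix.vecMulVec (eq' R) (eq' R))

theorem vee_mul_hat (M : Matrix (Fin 3) (Fin 3) ℝ) (w : Fin 3 → ℝ) :
    vee (M * hat w - (M * hat w)ᵀ) = (M.trace • (1 : Matrix (Fin 3) (Fin 3) ℝ) - Mᵀ) *ᵥ w := by
  ext i
  fin_cases i <;>
    simp [vee, hat, Matrix.mul_apply, Matrix.mulVec, dotProduct, Fin.sum_univ_three,
      Matrix.trace, Matrix.one_apply] <;> ring

theorem trace_mul_hat (M : Matrix (Fin 3) (Fin 3) ℝ) (w : Fin 3 → ℝ) :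
    (M * hat w).trace = -(vee (M - Mᵀ) ⬝ᵥ w) := by
  simp [vee, hat, Matrix.mul_apply, dotProduct, Fin.sum_univ_three, Matrix.trace]
  ring

/-- if `R` is a differentiable SO(3)-valued curve with `tr R(t) > -1`
satisfying `Ṙ = R ω^×`, then
`d/dt e_q(R(t)) = (1/(2√(1 + tr R)))(tr(R)·I - Rᵀ + 2 e_q e_qᵀ) ω`. -/
theorem eq_error_vector_derivative
    (R : ℝ → Matrix (Fin 3) (Fin 3) ℝ) (ω : ℝ → Fin 3 → ℝ)
    (hSO : ∀ t, SO3 (R t)) (htr : ∀ t, -1 < (R t).trace)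
    (hkin : ∀ t, ∀ i j, HasDerivAt (fun s => R s i j) ((R t * hat (ω t)) i j) t) :
    ∀ t, ∀ i, HasDerivAt (fun s => eq' (R s) i) ((Etilde (R t) *ᵥ ω t) i) t := by
  intro t i
  have hpos : 0 < 1 + (R t).trace := by linarith [htr t]
  have hs : 0 < Real.sqrt (1 + (R t).trace) := Real.sqrt_pos.mpr hpos
  have htrace : HasDerivAt (fun s => 1 + (R s).trace) (-(vee (R t - (R t)ᵀ) ⬝ᵥ ω t)) t := by
    rw [← trace_mul_hat]
    exact (HasDerivAt.fun_sum fun k _ => hkin t k k).const_add 1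
  have hvee : HasDerivAt (fun s => vee (R s - (R s)ᵀ) i)
      ((((R t).trace • (1 : Matrix (Fin 3) (Fin 3) ℝ) - (R t)ᵀ) *ᵥ ω t) i) t := by
    rw [← vee_mul_hat]
    fin_cases i
    · exact (hkin t 2 1).sub (hkin t 1 2)
    · exact (hkin t 0 2).sub (hkin t 2 0)
    · exact (hkin t 1 0).sub (hkin t 0 1)
  have hquot := hvee.fun_div ((htrace.sqrt hpos.ne').const_mul 2) (by positivity)
  have hfun : (fun s => eq' (R s) i) =
      fun s => vee (R s - (R s)ᵀ) i / (2 * Real.sqrt (1 + (R s).trace)) := by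
    funext s
    simp only [eq', Pi.smul_apply, smul_eq_mul]
    ring
  rw [hfun]
  refine hquot.congr_deriv (Eq.symm ?_)
  simp only [Etilde, eq', Matrix.smul_mulVec, Matrix.add_mulVec, Matrix.vecMulVec_mulVec,
    Pi.smul_apply, Pi.add_apply, smul_eq_mul, smul_dotProduct, MulOpposite.smul_eq_mul_unop,
    MulOpposite.unop_op]
  field_simp
  ring
end
end

section
/- Let α ∈ ℝ³ with ‖α‖ = 1 and θ ∈ ℝ with cos θ ≠ −1, and let E_q(α, θ) = (1/√(2 + 2cos θ))·[(1 + cos θ)I + (sin θ)α^×]. Then the characteristic polynomial of E_q(α, θ)ᵀE_q(α, θ) is (λ − 1)²·(λ − (1 + cos θ)/2); in particular, I − E_q(α, θ)ᵀE_q(α, θ) is positive semidefinite. -/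
/-!
Since `α^×` is skew and `(α^×)² = ααᵀ - I` for a unit vector `α`, the cross terms in `E_qᵀE_q`
cancel and, using `sin² θ = (1 - cos θ)(1 + cos θ)`,
`E_qᵀE_q = I - ((1 - cos θ)/2) ααᵀ` (`transpose_mul_Eq'`).
This is a rank-one perturbation of the identity, so its characteristic polynomial is
`(λ - 1)² (λ - 1 + (1 - cos θ)/2)`, and `I - E_qᵀE_q = ((1 - cos θ)/2) ααᵀ` is a nonnegative
multiple of a Gram matrix.
-/


open Matrix Polynomial Filter

noncomputable section

/-- The matrix `E_q(α, θ) = (1/√(2 + 2cos θ))[(1 + cos θ)I + (sin θ)α^×]`. -/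
def Eq' (α : Fin 3 → ℝ) (θ : ℝ) : Matrix (Fin 3) (Fin 3) ℝ :=
  (1 / Real.sqrt (2 + 2 * Real.cos θ)) •
    ((1 + Real.cos θ) • (1 : Matrix (Fin 3) (Fin 3) ℝ) + Real.sin θ • hat α)

lemma transpose_mul_Eq' (α : Fin 3 → ℝ) (hα : α ⬝ᵥ α = 1) (θ : ℝ) (hθ : Real.cos θ ≠ -1) :
    (Eq' α θ)ᵀ * Eq' α θ = 1 - ((1 - Real.cos θ) / 2) • vecMulVec α α := by
  have hpos : 0 < 1 + Real.cos θ :=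
    lt_of_le_of_ne (by linarith [Real.neg_one_le_cos θ]) fun h => hθ (by linarith)
  have hsq : (Real.sqrt (2 + 2 * Real.cos θ))⁻¹ ^ 2 * (2 * (1 + Real.cos θ)) = 1 := by
    rw [inv_pow, Real.sq_sqrt (by linarith)]
    field_simp
  have hcs := Real.sin_sq_add_cos_sq θ
  simp only [dotProduct, Fin.sum_univ_three] at hα
  have hhat : (hat α)ᵀ = -hat α := by
    ext i j
    fin_cases i <;> fin_cases j <;> simp [hat]
  have hhat2 : hat α * hat α = vecMulVec α α - 1 := by
    ext i j
    fin_cases i <;> fin_cases j <;>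
      simp [hat, Matrix.mul_apply, Fin.sum_univ_three, vecMulVec_apply] <;> linarith
  have hprod : (Eq' α θ)ᵀ * Eq' α θ = ((Real.sqrt (2 + 2 * Real.cos θ))⁻¹ ^ 2) •
      ((1 + Real.cos θ) ^ 2 • (1 : Matrix (Fin 3) (Fin 3) ℝ)
        - Real.sin θ ^ 2 • (hat α * hat α)) := by
    simp only [Eq', transpose_smul, transpose_add, transpose_one, hhat, smul_mul_smul_comm,
      add_mul, mul_add, neg_mul, smul_neg, mul_one, one_mul, one_div]
    module
  rw [hprod, hhat2]
  generalize (Real.sqrt (2 + 2 * Real.cos θ))⁻¹ ^ 2 = r at hsq ⊢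
  have h1 : r * ((1 + Real.cos θ) ^ 2 + Real.sin θ ^ 2) = 1 := by
    linear_combination hsq + r * hcs
  have h2 : r * Real.sin θ ^ 2 = (1 - Real.cos θ) / 2 := by
    linear_combination (1 - Real.cos θ) / 2 * hsq + r * hcs
  rw [← h2]
  calc _ = (r * ((1 + Real.cos θ) ^ 2 + Real.sin θ ^ 2)) • (1 : Matrix (Fin 3) (Fin 3) ℝ)
        - (r * Real.sin θ ^ 2) • vecMulVec α α := by module
    _ = _ := by rw [h1, one_smul]

lemma charpoly_one_sub_smul_vecMulVec (α : Fin 3 → ℝ) (hα : α ⬝ᵥ α = 1) (t : ℝ) :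
    (1 - t • vecMulVec α α).charpoly = (X - C 1) ^ 2 * (X - C (1 - t)) := by
  simp only [dotProduct, Fin.sum_univ_three] at hα
  have hC : (C (α 0) * C (α 0) + C (α 1) * C (α 1) + C (α 2) * C (α 2) : ℝ[X]) = 1 := by
    rw [← C_mul, ← C_mul, ← C_mul, ← C_add, ← C_add, hα, C_1]
  simp [Matrix.charpoly, charmatrix, det_fin_three, vecMulVec_apply]
  linear_combination C t * (X - 1) ^ 2 * hC

/-- for a unit vector `α` and `cos θ ≠ -1`, the characteristic polynomial
of `E_q(α,θ)ᵀ E_q(α,θ)` is `(λ - 1)²(λ - (1 + cos θ)/2)`; in particular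
`I - E_q(α,θ)ᵀ E_q(α,θ)` is positive semidefinite. -/
theorem charpoly_Eq
    (α : Fin 3 → ℝ) (hα : α ⬝ᵥ α = 1) (θ : ℝ) (hθ : Real.cos θ ≠ -1) :
    ((Eq' α θ)ᵀ * Eq' α θ).charpoly =
        (X - C 1) ^ 2 * (X - C ((1 + Real.cos θ) / 2)) ∧
    ((1 : Matrix (Fin 3) (Fin 3) ℝ) - (Eq' α θ)ᵀ * Eq' α θ).PosSemidef := by
  rw [transpose_mul_Eq' α hα θ hθ]
  constructor
  · rw [charpoly_one_sub_smul_vecMulVec α hα]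
    congr 3
    ring
  · rw [sub_sub_cancel]
    have h := posSemidef_vecMulVec_self_star α
    rw [star_trivial] at h
    exact h.smul (by linarith [Real.cos_le_one θ])
end
end

section
/- For every R ∈ SO(3) with Ψ_q(R) < 2 (equivalently tr(R) > −1), the attitude error function Ψ_q is locally quadratic in e_q: ‖e_q(R)‖² ≤ Ψ_q(R) ≤ 2‖e_q(R)‖². -/
/-!
Write `t = tr R` and `s = √(1 + t)`. For a rotation, `adj R = Rᵀ`, so the second invariant of `R`
equals `t`; with the unit columns this gives `‖(R - Rᵀ)^∨‖² = 3 - tr(R²) = (1 + t)(3 - t)`, hence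
`‖e_q‖² = (3 - t) / 4 = (2 - s)(2 + s) / 4`. As `Ψ_q = 2 - s` and `0 ≤ s ≤ 2` (because `t ≤ 3`),
the factor `(2 + s) / 4` lies in `[1/2, 1]`, which is the claim.
-/

open Matrix Polynomial Filter

noncomputable section

/-- For a rotation the adjugate is the transpose; comparing traces, the second invariant
(the sum of principal 2×2 minors) equals the trace. -/
lemma SO3.sum_minors {R : Matrix (Fin 3) (Fin 3) ℝ} (hR : SO3 R) :
    (R 1 1 * R 2 2 - R 1 2 * R 2 1) + (R 0 0 * R 2 2 - R 0 2 * R 2 0)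
      + (R 0 0 * R 1 1 - R 0 1 * R 1 0) = R.trace := by
  have h : R.adjugate = Rᵀ := by
    calc R.adjugate = Rᵀ * (R * R.adjugate) := by rw [← Matrix.mul_assoc, hR.1, Matrix.one_mul]
      _ = Rᵀ := by rw [Matrix.mul_adjugate, hR.2, one_smul, Matrix.mul_one]
  have ht := congrArg Matrix.trace h
  rw [Matrix.trace_transpose, Matrix.adjugate_fin_three, Matrix.trace_fin_three] at ht
  simp at ht
  linarith

lemma SO3.column_norm {R : Matrix (Fin 3) (Fin 3) ℝ} (hR : SO3 R) (j : Fin 3) :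
    R 0 j ^ 2 + R 1 j ^ 2 + R 2 j ^ 2 = 1 := by
  have h := congrFun (congrFun hR.1 j) j
  simp only [Matrix.mul_apply, Matrix.transpose_apply, Fin.sum_univ_three,
    Matrix.one_apply_eq] at h
  linarith

lemma SO3.trace_le_three {R : Matrix (Fin 3) (Fin 3) ℝ} (hR : SO3 R) : R.trace ≤ 3 := by
  rw [Matrix.trace_fin_three]
  have h0 : R 0 0 ≤ 1 := by nlinarith [hR.column_norm 0, sq_nonneg (R 1 0), sq_nonneg (R 2 0)]
  have h1 : R 1 1 ≤ 1 := by nlinarith [hR.column_norm 1, sq_nonneg (R 0 1), sq_nonneg (R 2 1)]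
  have h2 : R 2 2 ≤ 1 := by nlinarith [hR.column_norm 2, sq_nonneg (R 0 2), sq_nonneg (R 1 2)]
  linarith

/-- For rotation angle `θ` both sides equal `4 sin² θ`. -/
lemma SO3.vee_sub_transpose_sq {R : Matrix (Fin 3) (Fin 3) ℝ} (hR : SO3 R) :
    vee (R - Rᵀ) ⬝ᵥ vee (R - Rᵀ) = (1 + R.trace) * (3 - R.trace) := by
  have hm := hR.sum_minors
  have h0 := hR.column_norm 0
  have h1 := hR.column_norm 1
  have h2 := hR.column_norm 2
  simp only [Matrix.trace_fin_three] at hm ⊢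
  simp [vee, dotProduct, Fin.sum_univ_three]
  linear_combination h0 + h1 + h2 + 2 * hm

lemma SO3.errorVector_sq {R : Matrix (Fin 3) (Fin 3) ℝ} (hR : SO3 R) (htr : -1 < R.trace) :
    eq' R ⬝ᵥ eq' R = (3 - R.trace) / 4 := by
  have hpos : 0 < 1 + R.trace := by linarith
  have hs : 0 < Real.sqrt (1 + R.trace) := Real.sqrt_pos.mpr hpos
  have hsq := Real.sq_sqrt hpos.le
  rw [eq', smul_dotProduct, dotProduct_smul, hR.vee_sub_transpose_sq]
  simp only [smul_eq_mul]
  field_simp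
  rw [hsq]
  ring

/-- for `R ∈ SO(3)` with `Ψ_q(R) < 2` (equivalently `tr R > -1`),
`Ψ_q` is locally quadratic in `e_q`: `‖e_q(R)‖² ≤ Ψ_q(R) ≤ 2‖e_q(R)‖²`
(here `‖v‖² = v ⬝ᵥ v` is the squared Euclidean norm). -/
theorem Psiq_locally_quadratic
    (R : Matrix (Fin 3) (Fin 3) ℝ) (hR : SO3 R) (htr : -1 < R.trace) :
    eq' R ⬝ᵥ eq' R ≤ Psiq R ∧ Psiq R ≤ 2 * (eq' R ⬝ᵥ eq' R) := by
  have hpos : 0 ≤ 1 + R.trace := by linarith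
  have hs0 := Real.sqrt_nonneg (1 + R.trace)
  have hsq := Real.sq_sqrt hpos
  have hs2 : Real.sqrt (1 + R.trace) ≤ 2 :=
    Real.sqrt_le_iff.mpr ⟨by norm_num, by linarith [hR.trace_le_three]⟩
  rw [hR.errorVector_sq htr, Psiq]
  constructor <;> nlinarith
end
end
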